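/- arXiv:2205.05002 — 4 statements merged into one kernel-verified Lean document; each statement's English description precedes it below -/
import Mathlib

section
/- Let K be a finite index set and V : K → ℝ. Then the Lebesgue integral over x ∈ ℝ of (∏_{k∈K} exp(−exp(−(V(k)+x)))) · exp(−x − exp(−x)) equals 1 / (1 + ∑_{k∈K} exp(−V(k))). -/
open MeasureTheory Real

/-- The basic Gumbel integral identity underlying the multinomial logit formula:
for a finite index set `K` and `V : K → ℝ`,
`∫ x, (∏ k, exp (-exp (-(V k + x)))) * exp (-x - exp (-x)) = 1 / (1 + ∑ k, exp (-V k))`. -/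
theorem gumbel_logit_integral (K : Type*) [Fintype K] (V : K → ℝ) :
    ∫ x : ℝ, (∏ k : K, Real.exp (-Real.exp (-(V k + x)))) * Real.exp (-x - Real.exp (-x))
      = 1 / (1 + ∑ k : K, Real.exp (-(V k))) := by
  have hS : 0 < 1 + ∑ k : K, Real.exp (-(V k)) := by positivity
  have hf : ∀ x : ℝ,
      (∏ k : K, Real.exp (-Real.exp (-(V k + x)))) * Real.exp (-x - Real.exp (-x))
      = Real.exp (-x) * Real.exp (-((1 + ∑ k : K, Real.exp (-(V k))) * Real.exp (-x))) := by
    intro x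
    rw [← Real.exp_sum, ← Real.exp_add, ← Real.exp_add, Finset.sum_neg_distrib]
    have : ∑ k : K, Real.exp (-(V k + x)) = (∑ k : K, Real.exp (-(V k))) * Real.exp (-x) := by
      rw [Finset.sum_mul]
      refine Finset.sum_congr rfl fun k _ => ?_
      rw [← Real.exp_add, neg_add]
    rw [this]
    congr 1
    ring
  simp_rw [hf]
  generalize (1 + ∑ k : K, Real.exp (-(V k))) = S at hS
  have hd : ∀ x : ℝ, HasDerivAt (fun x => Real.exp (-(S * Real.exp (-x))) / S)
      (Real.exp (-x) * Real.exp (-(S * Real.exp (-x)))) x := by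
    intro x
    have h : HasDerivAt (fun x => Real.exp (-(S * Real.exp (-x))) / S)
        (Real.exp (-(S * Real.exp (-x))) * (-(S * (Real.exp (-x) * (-1)))) / S) x :=
      ((((hasDerivAt_id x).neg.exp).const_mul S).neg.exp).div_const S
    have e : Real.exp (-(S * Real.exp (-x))) * (-(S * (Real.exp (-x) * (-1)))) / S
        = Real.exp (-x) * Real.exp (-(S * Real.exp (-x))) := by
      rw [div_eq_iff hS.ne']
      ring
    rwa [e] at h
  have hc : Continuous fun x : ℝ => Real.exp (-x) * Real.exp (-(S * Real.exp (-x))) := by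
    fun_prop
  have hint : Integrable fun x : ℝ => Real.exp (-x) * Real.exp (-(S * Real.exp (-x))) := by
    refine integrable_of_intervalIntegral_norm_bounded (l := Filter.atTop)
      (a := fun t : ℝ => -t) (b := fun t : ℝ => t) (1 / S)
      (fun i => (hc.integrableOn_Icc).mono_set Set.Ioc_subset_Icc_self)
      Filter.tendsto_neg_atTop_atBot Filter.tendsto_id (Filter.Eventually.of_forall fun t => ?_)
    have hn : ∀ x : ℝ, ‖Real.exp (-x) * Real.exp (-(S * Real.exp (-x)))‖
        = Real.exp (-x) * Real.exp (-(S * Real.exp (-x))) := fun x =>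
      Real.norm_of_nonneg (by positivity)
    simp_rw [hn]
    rw [intervalIntegral.integral_eq_sub_of_hasDerivAt (fun x _ => hd x)
      (hc.intervalIntegrable _ _)]
    have h1 : Real.exp (-(S * Real.exp (-t))) / S ≤ 1 / S := by
      gcongr
      rw [Real.exp_le_one_iff]
      have : 0 < S * Real.exp (-t) := by positivity
      linarith
    have h2 : 0 ≤ Real.exp (-(S * Real.exp (-(-t)))) / S := by positivity
    linarith
  have hbot : Filter.Tendsto (fun x => Real.exp (-(S * Real.exp (-x))) / S) Filter.atBot
      (nhds 0) := by
    have h := (Real.tendsto_exp_neg_atTop_nhds_zero.comp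
      ((Real.tendsto_exp_atTop.comp Filter.tendsto_neg_atBot_atTop).const_mul_atTop hS)).div_const S
    simpa [Function.comp_def] using h
  have htop : Filter.Tendsto (fun x => Real.exp (-(S * Real.exp (-x))) / S) Filter.atTop
      (nhds (1 / S)) := by
    have h := ((Real.continuous_exp.tendsto _).comp
      (Real.tendsto_exp_neg_atTop_nhds_zero.const_mul S).neg).div_const S
    simpa [Function.comp_def] using h
  rw [integral_of_hasDerivAt_of_tendsto hd hint hbot htop, sub_zero]
end

section
/- Fix a finite set of players I, for each i ∈ I a finite nonempty action set Y_i, payoff functions v_i : (∏_{j∈I} Y_j) → ℝ, and an action profile y ∈ ∏_{j∈I} Y_j. Let γ be the Gumbel probability measure on ℝ and let μ be the product measure on ∏_{i∈I} (Y_i → ℝ) in which every coordinate ε_i(a), for i ∈ I and a ∈ Y_i, is an independent copy of γ. Then μ({ε : for all i ∈ I and all y'_i ∈ Y_i, v_i(y) + ε_i(y_i) ≥ v_i(y'_i, y_{−i}) + ε_i(y'_i)}) = ∏_{i∈I} [ exp(v_i(y)) / ∑_{y'_i ∈ Y_i} exp(v_i(y'_i, y_{−i})) ]. That is, the probability that y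 is a pure strategy Nash equilibrium equals the product over players of multinomial logit probabilities. -/
open MeasureTheory Real

lemma gumbelDensity_measurable :
    Measurable fun x => ENNReal.ofReal (Real.exp (-x - Real.exp (-x))) := by
  fun_prop

lemma gumbel_integrable (γ : Measure ℝ) [IsProbabilityMeasure γ]
    (hγ : γ = volume.withDensity fun x => ENNReal.ofReal (Real.exp (-x - Real.exp (-x)))) :
    Integrable (fun x : ℝ => Real.exp (-x - Real.exp (-x))) volume := by
  refine ⟨by fun_prop, ?_⟩
  rw [hasFiniteIntegral_iff_ofReal (Filter.Eventually.of_forall fun x => (Real.exp_pos _).le)]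
  have h : γ Set.univ = 1 := measure_univ
  rw [hγ, withDensity_apply _ MeasurableSet.univ, Measure.restrict_univ] at h
  rw [h]
  exact ENNReal.one_lt_top

lemma gumbel_Iic (γ : Measure ℝ) [IsProbabilityMeasure γ]
    (hγ : γ = volume.withDensity fun x => ENNReal.ofReal (Real.exp (-x - Real.exp (-x))))
    (t : ℝ) : γ (Set.Iic t) = ENNReal.ofReal (Real.exp (-Real.exp (-t))) := by
  have hi := gumbel_integrable γ hγ
  have key : ∫ x in Set.Iic t, Real.exp (-x - Real.exp (-x)) = Real.exp (-Real.exp (-t)) - 0 := by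
    refine integral_Iic_of_hasDerivAt_of_tendsto' (f := fun x => Real.exp (-Real.exp (-x)))
      ?_ hi.integrableOn ?_
    · intro x _
      have h : HasDerivAt (fun x : ℝ => Real.exp (-Real.exp (-x)))
          (Real.exp (-Real.exp (-x)) * -(Real.exp (-x) * -1)) x :=
        (((hasDerivAt_id x).neg.exp).neg).exp
      have e : Real.exp (-x - Real.exp (-x))
          = Real.exp (-Real.exp (-x)) * -(Real.exp (-x) * -1) := by
        rw [sub_eq_add_neg, Real.exp_add]
        ring
      rw [e]
      exact h
    · refine Real.tendsto_exp_neg_atTop_nhds_zero.comp ?_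
      exact Real.tendsto_exp_atTop.comp Filter.tendsto_neg_atBot_atTop
  rw [hγ, withDensity_apply _ measurableSet_Iic, ← ofReal_integral_eq_lintegral_ofReal
    hi.integrableOn (Filter.Eventually.of_forall fun x => (Real.exp_pos _).le), key, sub_zero]

lemma gumbel_scaled (γ : Measure ℝ) [IsProbabilityMeasure γ]
    (hγ : γ = volume.withDensity fun x => ENNReal.ofReal (Real.exp (-x - Real.exp (-x))))
    (c : ℝ) (hc : 0 ≤ c) :
    ∫⁻ x, ENNReal.ofReal (Real.exp (-(c * Real.exp (-x)))) ∂γ = ENNReal.ofReal (1 / (1 + c)) := by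
  have h1 : ∫⁻ x, ENNReal.ofReal (Real.exp (-x - Real.exp (-x))) = 1 := by
    have h : γ Set.univ = 1 := measure_univ
    rwa [hγ, withDensity_apply _ MeasurableSet.univ, Measure.restrict_univ] at h
  have hC : 0 < 1 + c := by linarith
  rw [hγ, lintegral_withDensity_eq_lintegral_mul _ gumbelDensity_measurable (by fun_prop),
    ← lintegral_add_right_eq_self _ (Real.log (1 + c))]
  have : ∀ x : ℝ, ((fun x => ENNReal.ofReal (Real.exp (-x - Real.exp (-x)))) *
      fun x => ENNReal.ofReal (Real.exp (-(c * Real.exp (-x))))) (x + Real.log (1 + c))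
      = ENNReal.ofReal (1 / (1 + c)) * ENNReal.ofReal (Real.exp (-x - Real.exp (-x))) := by
    intro x
    have e : Real.exp (-(x + Real.log (1 + c))) = Real.exp (-x) * (1 / (1 + c)) := by
      rw [neg_add, Real.exp_add, Real.exp_neg (Real.log _), Real.exp_log hC, one_div]
    have e' : 1 / (1 + c) = Real.exp (-Real.log (1 + c)) := by
      rw [Real.exp_neg, Real.exp_log hC, one_div]
    simp only [Pi.mul_apply]
    rw [← ENNReal.ofReal_mul (Real.exp_pos _).le, ← ENNReal.ofReal_mul (by positivity), e,
      ← Real.exp_add]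
    congr 1
    conv_rhs => rw [e', ← Real.exp_add]
    congr 1
    field_simp
    ring
  simp_rw [this]
  rw [lintegral_const_mul _ gumbelDensity_measurable, h1, mul_one]

lemma gumbel_logit (γ : Measure ℝ) [IsProbabilityMeasure γ]
    (hγ : γ = volume.withDensity fun x => ENNReal.ofReal (Real.exp (-x - Real.exp (-x))))
    {A : Type*} [Fintype A] (w : A → ℝ) (a : A) :
    Measure.pi (fun _ : A => γ) {e : A → ℝ | ∀ b, w b + e b ≤ w a + e a}
      = ENNReal.ofReal (Real.exp (w a) / ∑ b, Real.exp (w b)) := by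
  classical
  have mp := measurePreserving_piEquivPiSubtypeProd (fun _ : A => γ) (fun b => b = a)
  let S : Set (({b : A // b = a} → ℝ) × ({b : A // ¬ b = a} → ℝ)) :=
    {p | ∀ b : {b : A // ¬ b = a}, w b + p.2 b ≤ w a + p.1 ⟨a, rfl⟩}
  have hS : MeasurableSet S := by
    have : S = ⋂ b : {b : A // ¬ b = a}, {p | w b + p.2 b ≤ w a + p.1 ⟨a, rfl⟩} := by
      ext p; simp [S]
    rw [this]
    exact MeasurableSet.iInter fun b => measurableSet_le (by fun_prop) (by fun_prop)
  have hpre : {e : A → ℝ | ∀ b, w b + e b ≤ w a + e a}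
      = (MeasurableEquiv.piEquivPiSubtypeProd (fun _ : A => ℝ) (fun b => b = a)) ⁻¹' S := by
    ext e
    constructor
    · intro h b
      exact h b
    · intro h b
      by_cases hb : b = a
      · rw [hb]
      · exact h ⟨b, hb⟩
  rw [hpre, mp.measure_preimage_equiv, Measure.prod_apply hS]
  set c : ℝ := ∑ b : {b : A // ¬ b = a}, Real.exp (w b - w a) with hc
  have hc0 : 0 ≤ c := Finset.sum_nonneg fun _ _ => (Real.exp_pos _).le
  have slice : ∀ x : {b : A // b = a} → ℝ,
      Measure.pi (fun _ : {b : A // ¬ b = a} => γ) (Prod.mk x ⁻¹' S)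
      = (fun t : ℝ => ENNReal.ofReal (Real.exp (-(c * Real.exp (-t))))) (x ⟨a, rfl⟩) := by
    intro x
    have : Prod.mk x ⁻¹' S = Set.univ.pi
        fun b : {b : A // ¬ b = a} => Set.Iic (w a - w b + x ⟨a, rfl⟩) := by
      ext e
      simp only [S, Set.mem_preimage, Set.mem_ofPred_eq, Set.mem_univ_pi, Set.mem_Iic]
      refine forall_congr' fun b => ?_
      constructor <;> intro h <;> linarith
    rw [this, Measure.pi_pi]
    simp_rw [gumbel_Iic γ hγ]
    rw [← ENNReal.ofReal_prod_of_nonneg fun _ _ => (Real.exp_pos _).le, ← Real.exp_sum,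
      Finset.sum_neg_distrib, hc, Finset.sum_mul]
    have e : ∀ b : {b : A // ¬ b = a}, Real.exp (-(w a - w b + x ⟨a, rfl⟩))
        = Real.exp (w b - w a) * Real.exp (-x ⟨a, rfl⟩) := by
      intro b
      rw [← Real.exp_add]
      congr 1
      ring
    simp_rw [e]
  simp_rw [slice]
  have hev := (measurePreserving_eval (fun _ : {b : A // b = a} => γ) ⟨a, rfl⟩).lintegral_comp
    (f := fun t : ℝ => ENNReal.ofReal (Real.exp (-(c * Real.exp (-t))))) (by fun_prop)
  simp only [Function.eval] at hev
  rw [gumbel_scaled γ hγ c hc0] at hev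
  trans ENNReal.ofReal (1 / (1 + c))
  · convert hev
  have hsum : ∑ b, Real.exp (w b) = Real.exp (w a) * (1 + c) := by
    rw [Fintype.sum_eq_add_sum_subtype_ne _ a, mul_add, mul_one, hc, Finset.mul_sum]
    congr 1
    refine Finset.sum_congr rfl fun b _ => ?_
    rw [← Real.exp_add]
    congr 1
    ring
  rw [hsum]
  congr 1
  have : Real.exp (w a) ≠ 0 := (Real.exp_pos _).ne'
  have : 1 + c ≠ 0 := by linarith
  field_simp



/-- The probability, under i.i.d. Gumbel action-specific shocks, that the action profile `y`
is a pure strategy Nash equilibrium of the additively separable game equals the product over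
players of multinomial logit probabilities. -/
theorem nash_probability_logit (I : Type*) [Fintype I] [DecidableEq I]
    (Y : I → Type*) [∀ i, Fintype (Y i)] [∀ i, Nonempty (Y i)]
    (v : ∀ i, (∀ j, Y j) → ℝ) (y : ∀ j, Y j)
    (γ : Measure ℝ) [IsProbabilityMeasure γ]
    (hγ : γ = volume.withDensity fun x => ENNReal.ofReal (Real.exp (-x - Real.exp (-x)))) :
    Measure.pi (fun i : I => Measure.pi (fun _ : Y i => γ))
        {ε : ∀ i, Y i → ℝ |
          ∀ i, ∀ y'i : Y i,
            v i (Function.update y i y'i) + ε i y'i ≤ v i y + ε i (y i)}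
      = ENNReal.ofReal
          (∏ i : I,
            Real.exp (v i y) / ∑ y'i : Y i, Real.exp (v i (Function.update y i y'i))) := by
  have hset : {ε : ∀ i, Y i → ℝ | ∀ i, ∀ y'i : Y i,
        v i (Function.update y i y'i) + ε i y'i ≤ v i y + ε i (y i)}
      = Set.univ.pi fun i => {e : Y i → ℝ | ∀ b,
          v i (Function.update y i b) + e b ≤ v i (Function.update y i (y i)) + e (y i)} := by
    ext ε
    simp
  rw [hset, Measure.pi_pi, ENNReal.ofReal_prod_of_nonneg fun i _ => by positivity]
  refine Finset.prod_congr rfl fun i _ => ?_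
  rw [gumbel_logit γ hγ (fun b => v i (Function.update y i b)) (y i), Function.update_eq_self]
end

section
/- Let A be a finite nonempty set, V : A → ℝ, and j ∈ A. Let γ be the Gumbel probability measure on ℝ and let ν be the product measure on A → ℝ whose coordinates are independent copies of γ. Then ν({e : A → ℝ : for all k ∈ A, V(j) + e(j) ≥ V(k) + e(k)}) = exp(V(j)) / ∑_{k∈A} exp(V(k)). -/
open MeasureTheory Real

lemma gum_deriv (C : ℝ) (hC : 0 < C) (x : ℝ) :
    HasDerivAt (fun x => exp (-(C * exp (-x))) / C) (exp (-x - C * exp (-x))) x := by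
  have h := (((((hasDerivAt_id x).neg).exp).const_mul C).neg.exp).div_const C
  refine h.congr_deriv ?_
  rw [sub_eq_add_neg, Real.exp_add]
  simp only [id, Pi.neg_apply]
  field_simp

lemma gum_bot (C : ℝ) (hC : 0 < C) :
    Filter.Tendsto (fun x => exp (-(C * exp (-x))) / C) Filter.atBot (nhds 0) := by
  have h1 : Filter.Tendsto (fun x : ℝ => C * exp (-x)) Filter.atBot Filter.atTop :=
    (tendsto_exp_atTop.comp Filter.tendsto_neg_atBot_atTop).const_mul_atTop hC
  simpa using ((tendsto_exp_neg_atTop_nhds_zero.comp h1).div_const C)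

lemma gum_top (C : ℝ) :
    Filter.Tendsto (fun x => exp (-(C * exp (-x))) / C) Filter.atTop (nhds (1 / C)) := by
  have h2 := ((tendsto_exp_neg_atTop_nhds_zero.const_mul C).neg.rexp).div_const C
  simpa using h2

lemma gum_integrable (C : ℝ) (hC : 0 < C) :
    Integrable (fun x => exp (-x - C * exp (-x))) := by
  have hcont : Continuous (fun x => exp (-x - C * exp (-x))) := by fun_prop
  refine integrable_of_intervalIntegral_norm_tendsto (l := Filter.atTop)
    (a := fun i : ℝ => -i) (b := fun i => i) (1 / C - 0)
    (fun i => hcont.integrableOn_Ioc) Filter.tendsto_neg_atTop_atBot Filter.tendsto_id ?_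
  refine ((gum_top C).sub ((gum_bot C hC).comp Filter.tendsto_neg_atTop_atBot)).congr ?_
  intro i
  simp only [Real.norm_eq_abs, abs_exp]
  rw [intervalIntegral.integral_eq_sub_of_hasDerivAt (fun x _ => gum_deriv C hC x)
    (hcont.intervalIntegrable _ _)]
  rfl

lemma gum_lintegral (C : ℝ) (hC : 0 < C) :
    ∫⁻ x, ENNReal.ofReal (exp (-x - C * exp (-x))) = ENNReal.ofReal (1 / C) := by
  rw [← ofReal_integral_eq_lintegral_ofReal (gum_integrable C hC)
    (Filter.Eventually.of_forall fun x => (exp_pos _).le),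
    integral_of_hasDerivAt_of_tendsto (gum_deriv C hC) (gum_integrable C hC) (gum_bot C hC)
      (gum_top C), sub_zero]

lemma gum_cdf (a : ℝ) :
    (volume.withDensity fun x => ENNReal.ofReal (Real.exp (-x - Real.exp (-x)))) (Set.Iic a)
      = ENNReal.ofReal (exp (-exp (-a))) := by
  have hi := gum_integrable 1 one_pos
  have h := integral_Iic_of_hasDerivAt_of_tendsto' (a := a)
    (fun x _ => gum_deriv 1 one_pos x) hi.integrableOn (gum_bot 1 one_pos)
  rw [withDensity_apply _ measurableSet_Iic]
  simp only [one_mul, div_one, sub_zero] at h hi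
  rw [← h, ofReal_integral_eq_lintegral_ofReal hi.integrableOn
    (Filter.Eventually.of_forall fun x => (exp_pos _).le)]

/-- The multinomial logit choice probability: if the shocks `e k`, `k ∈ A`, are i.i.d. Gumbel,
the probability that alternative `j` maximizes `V k + e k` is `exp (V j) / ∑ k, exp (V k)`. -/
theorem logit_choice_probability (A : Type*) [Fintype A] [Nonempty A]
    (V : A → ℝ) (j : A)
    (γ : Measure ℝ) [IsProbabilityMeasure γ]
    (hγ : γ = volume.withDensity fun x => ENNReal.ofReal (Real.exp (-x - Real.exp (-x)))) :
    Measure.pi (fun _ : A => γ)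
        {e : A → ℝ | ∀ k : A, V k + e k ≤ V j + e j}
      = ENNReal.ofReal (Real.exp (V j) / ∑ k : A, Real.exp (V k)) := by
  classical
  have hcdf : ∀ a, γ (Set.Iic a) = ENNReal.ofReal (exp (-exp (-a))) := by
    intro a; rw [hγ]; exact gum_cdf a
  let S : Set (({k // k = j} → ℝ) × ({k // ¬ k = j} → ℝ)) :=
    {q | ∀ k : {k // ¬ k = j}, V k + q.2 k ≤ V j + q.1 ⟨j, rfl⟩}
  have hS : MeasurableSet S := by
    simp only [S, Set.ofPred_forall]
    exact MeasurableSet.iInter fun k => measurableSet_le (by fun_prop) (by fun_prop)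
  have hpre : {e : A → ℝ | ∀ k : A, V k + e k ≤ V j + e j}
      = (MeasurableEquiv.piEquivPiSubtypeProd (fun _ : A => ℝ) (fun k => k = j)) ⁻¹' S := by
    ext e
    constructor
    · intro h k
      exact h k
    · intro h k
      by_cases hk : k = j
      · rw [hk]
      · exact h ⟨k, hk⟩
  have hmp := measurePreserving_piEquivPiSubtypeProd (fun _ : A => γ) (fun k => k = j)
  rw [hpre, hmp.measure_preimage hS.nullMeasurableSet, Measure.prod_apply hS]
  set c : ℝ := ∑ k : {k // ¬ k = j}, exp (V k - V j) with hc
  have hsec : ∀ u : {k // k = j} → ℝ,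
      Measure.pi (fun _ : {k // ¬ k = j} => γ) (Prod.mk u ⁻¹' S)
        = ENNReal.ofReal (exp (-(c * exp (-(u ⟨j, rfl⟩))))) := by
    intro u
    have : Prod.mk u ⁻¹' S
        = Set.univ.pi fun k : {k // ¬ k = j} => Set.Iic (V j + u ⟨j, rfl⟩ - V k) := by
      ext w
      simp only [S, Set.mem_preimage, Set.mem_ofPred_eq, Set.mem_univ_pi, Set.mem_Iic]
      exact forall_congr' fun k => by constructor <;> intro h <;> linarith
    rw [this, Measure.pi_pi]
    simp_rw [hcdf]
    rw [← ENNReal.ofReal_prod_of_nonneg (fun _ _ => (exp_pos _).le), ← Real.exp_sum,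
      Finset.sum_neg_distrib, hc, Finset.sum_mul]
    congr 3
    refine Finset.sum_congr rfl fun k _ => ?_
    rw [← Real.exp_add]
    congr 1
    ring
  simp_rw [hsec]
  have hev := fun (_ : Fintype {k // k = j}) =>
    measurePreserving_eval (fun _ : {k // k = j} => γ) ⟨j, rfl⟩
  have hm : Measurable fun x : ℝ => ENNReal.ofReal (exp (-(c * exp (-x)))) := by fun_prop
  have hc0 : 0 ≤ c := Finset.sum_nonneg fun _ _ => (exp_pos _).le
  refine ((hev _).lintegral_comp hm).trans ?_
  rw [hγ, lintegral_withDensity_eq_lintegral_mul _ (by fun_prop) hm]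
  have : ∀ x : ℝ, ((fun x => ENNReal.ofReal (Real.exp (-x - Real.exp (-x)))) *
      fun x : ℝ => ENNReal.ofReal (exp (-(c * exp (-x))))) x
      = ENNReal.ofReal (exp (-x - (1 + c) * exp (-x))) := by
    intro x
    rw [Pi.mul_apply, ← ENNReal.ofReal_mul (exp_pos _).le, ← Real.exp_add]
    congr 2
    ring
  simp_rw [this]
  rw [gum_lintegral _ (by linarith)]
  congr 1
  have hsum : ∑ k : A, exp (V k) = exp (V j) * (1 + c) := by
    rw [← Fintype.sum_subtype_add_sum_subtype (fun k => k = j), mul_add, hc, Finset.mul_sum]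
    congr 1
    · simp
      rfl
    · refine Finset.sum_congr rfl fun k _ => ?_
      rw [← Real.exp_add]
      congr 1
      ring
  rw [hsum]
  have : 1 + c ≠ 0 := by linarith
  have := exp_ne_zero (V j)
  field_simp
end

section
/- Fix a finite set of players I, for each i ∈ I a finite nonempty action set Y_i, a finite index set X of constraints, and for each (y, x) ∈ (∏_{j∈I} Y_j) × X a constant c_{y,x} ∈ ℝ. Suppose that for each player i, each action profile z, and each x ∈ X, the payoff index v_i(z, x; θ) is an affine function of θ ∈ ℝ^d. Then the set Θ_I^{ABJ} = { θ ∈ ℝ^d : for all action profiles y and all x ∈ X, c_{y,x} ≤ ∑_{i∈I} [ v_i(y, x; θ) − log( ∑_{y'_i ∈ Y_i} exp( v_i(y'_i, y_{−i}, x; θ) ) ) ] } is a convex subset of ℝ^d. -/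
theorem lse_convex_aux {ι : Type*} [Fintype ι] [Nonempty ι] (u w : ι → ℝ) (a b : ℝ)
    (ha : 0 ≤ a) (hb : 0 ≤ b) (hab : a + b = 1) :
    Real.log (∑ k, Real.exp (a * u k + b * w k)) ≤
      a * Real.log (∑ k, Real.exp (u k)) + b * Real.log (∑ k, Real.exp (w k)) := by
  have pos : ∀ f : ι → ℝ, 0 < ∑ k, Real.exp (f k) := fun f =>
    Finset.sum_pos (fun k _ => Real.exp_pos _) Finset.univ_nonempty
  have norm1 : ∀ f : ι → ℝ,
      ∑ k, Real.exp (f k - Real.log (∑ k, Real.exp (f k))) = 1 := by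
    intro f
    simp_rw [Real.exp_sub, Real.exp_log (pos f)]
    rw [← Finset.sum_div, div_self (pos f).ne']
  have hu := norm1 u
  have hw := norm1 w
  set A := Real.log (∑ k, Real.exp (u k))
  set B := Real.log (∑ k, Real.exp (w k))
  rw [Real.log_le_iff_le_exp (pos _)]
  have key : ∑ k, Real.exp (a * (u k - A) + b * (w k - B)) ≤ 1 := by
    calc _ ≤ ∑ k, (a * Real.exp (u k - A) + b * Real.exp (w k - B)) :=
          Finset.sum_le_sum fun k _ => by
            simpa using convexOn_exp.2 (Set.mem_univ (u k - A)) (Set.mem_univ (w k - B)) ha hb hab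
      _ = 1 := by
          rw [Finset.sum_add_distrib, ← Finset.mul_sum, ← Finset.mul_sum, hu, hw]
          linarith
  calc _ = Real.exp (a * A + b * B) * ∑ k, Real.exp (a * (u k - A) + b * (w k - B)) := by
        rw [Finset.mul_sum]
        refine Finset.sum_congr rfl fun k _ => ?_
        rw [← Real.exp_add]
        congr 1
        ring
    _ ≤ Real.exp (a * A + b * B) * 1 := by gcongr
    _ = _ := mul_one _

/-- When the payoff indices are affine in `θ`, the ABJ identified set
`{θ : ∀ y x, c_{y,x} ≤ ∑ i (v i y x θ - log ∑_{y'i} exp (v i (y'i, y_{-i}) x θ))}`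
is a convex subset of `ℝ^d`. -/
theorem ABJ_identified_set_convex (I : Type*) [Fintype I] [DecidableEq I]
    (Y : I → Type*) [∀ i, Fintype (Y i)] [∀ i, Nonempty (Y i)]
    (X : Type*) [Fintype X] (d : ℕ)
    (c : (∀ j, Y j) → X → ℝ)
    (coef : ∀ i, (∀ j, Y j) → X → (Fin d → ℝ)) (cons : ∀ i, (∀ j, Y j) → X → ℝ)
    (v : ∀ i, (∀ j, Y j) → X → (Fin d → ℝ) → ℝ)
    (hv : ∀ i z x θ, v i z x θ = (∑ t : Fin d, coef i z x t * θ t) + cons i z x) :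
    Convex ℝ
      {θ : Fin d → ℝ |
        ∀ (y : ∀ j, Y j) (x : X),
          c y x ≤
            ∑ i : I,
              (v i y x θ -
                Real.log
                  (∑ y'i : Y i, Real.exp (v i (Function.update y i y'i) x θ)))} := by
  intro θ hθ η hη a b ha hb hab y x
  have haff : ∀ i z, v i z x (a • θ + b • η) = a * v i z x θ + b * v i z x η := by
    intro i z
    have h1 : ∑ t : Fin d, coef i z x t * (a • θ + b • η) t =
        a * ∑ t : Fin d, coef i z x t * θ t + b * ∑ t : Fin d, coef i z x t * η t := by
      rw [Finset.mul_sum, Finset.mul_sum, ← Finset.sum_add_distrib]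
      refine Finset.sum_congr rfl fun t _ => ?_
      simp only [Pi.add_apply, Pi.smul_apply, smul_eq_mul]
      ring
    rw [hv, hv, hv, h1]
    linear_combination (-cons i z x) * hab
  have h1 := mul_le_mul_of_nonneg_left (hθ y x) ha
  have h2 := mul_le_mul_of_nonneg_left (hη y x) hb
  have hc : c y x = a * c y x + b * c y x := by rw [← add_mul, hab, one_mul]
  rw [hc]
  refine (add_le_add h1 h2).trans ?_
  rw [Finset.mul_sum, Finset.mul_sum, ← Finset.sum_add_distrib]
  refine Finset.sum_le_sum fun i _ => ?_
  simp only [haff]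
  have := lse_convex_aux (fun k : Y i => v i (Function.update y i k) x θ)
    (fun k : Y i => v i (Function.update y i k) x η) a b ha hb hab
  linarith
end
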